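/- Let L : A → ℝ be a linear functional with L(f²) ≥ 0 for all f ∈ A. Then there exist a positive Borel measure ν₀ on the unit sphere S^{d−1} = {t ∈ ℝ^d : t₁² + ⋯ + t_d² = 1} and a positive Borel measure ν₁ on X = ℝ^d∖{0} such that for every f ∈ A: (a) for each t ∈ S^{d−1} the radial limit f₀(t) := lim_{r→0⁺} f(r·t) exists; (b) the function f₀ is ν₀-integrable and f is ν₁-integrable; and (c) L(f) = ∫_{S^{d−1}} f₀(t) dν₀(t) + ∫_X f(x) dν₁(x). -/

import Mathlib

noncomputable section

/-- The punctured space `ℝ^d ∖ {0}`. -/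
def Xsp (d : ℕ) : Type := {x : Fin d → ℝ // x ≠ 0}

/-- The restriction of the `j`-th coordinate function to `ℝ^d ∖ {0}`. -/
def coordFn {d : ℕ} (j : Fin d) : Xsp d → ℝ := fun x => x.1 j

/-- The function `f_kl(x) = x_k x_l / (x₁² + ⋯ + x_d²)` on `ℝ^d ∖ {0}`. -/
def fklFn {d : ℕ} (kk ll : Fin d) : Xsp d → ℝ :=
  fun x => x.1 kk * x.1 ll / ∑ i : Fin d, (x.1 i) ^ 2

/-- The algebra `A`: the subalgebra of real-valued functions on `ℝ^d ∖ {0}`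
generated by the coordinate functions and the functions `f_kl`. -/
def Aalg (d : ℕ) : Subalgebra ℝ (Xsp d → ℝ) :=
  Algebra.adjoin ℝ
    (Set.range (coordFn (d := d)) ∪
      Set.range (fun p : Fin d × Fin d => fklFn p.1 p.2))

/-- The coordinate function as an element of `A`. -/
def coordA {d : ℕ} (j : Fin d) : Aalg d :=
  ⟨coordFn j, Algebra.subset_adjoin (Set.mem_union_left _ ⟨j, rfl⟩)⟩

/-- The function `f_kl` as an element of `A`. -/
def fklA {d : ℕ} (kk ll : Fin d) : Aalg d :=
  ⟨fklFn kk ll, Algebra.subset_adjoin (Set.mem_union_right _ ⟨(kk, ll), rfl⟩)⟩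

/-- Restriction of a polynomial to `ℝ^d ∖ {0}`, as an element of `A`
(the polynomial expression in the coordinate functions). -/
def polyRes {d : ℕ} : MvPolynomial (Fin d) ℝ →ₐ[ℝ] Aalg d :=
  MvPolynomial.aeval coordA

instance (d : ℕ) : MeasurableSpace (Xsp d) := by unfold Xsp; infer_instance

end

/-- The unit sphere `S^{d-1}` in `ℝ^d`. -/
def Sph (d : ℕ) : Type := {t : Fin d → ℝ // ∑ i : Fin d, (t i) ^ 2 = 1}

instance (d : ℕ) : MeasurableSpace (Sph d) := by unfold Sph; infer_instance

/-!
In polar coordinates `(r, t) ↦ r • t`, with `r` of either sign, `A` becomes the algebra of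
polynomial functions on the cylinder `ℝ × S^{d-1}` that are even under `(r, t) ↦ (-r, -t)`. Taking
even parts turns squares into sums of squares, so `L` extends to a functional on all polynomial
functions `B[r]`, with `B` the polynomial functions on the sphere, that is nonnegative on squares.

Such a functional is nonnegative on every nonnegative function. Sums of squares in `B` have the
order unit `1`, because `∑ tⱼ² = 1`; hence an extreme positive functional on polynomials of bounded
degree in `r` treats the elements of `B` as scalars, through a point of the sphere. That leaves a
nonnegative real polynomial in `r`, which is a sum of squares. Haviland's theorem now represents the
functional by a measure on the cylinder; the part on `r = 0` yields `ν₀`, and the image of the rest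
under polar coordinates is `ν₁`.
-/

open CompactlySupported Filter MeasureTheory NNReal Polynomial Topology

theorem nonneg_eval_of_nonneg_eval_mul {p q : ℝ[X]} (hp : p ≠ 0) (hp_nonneg : ∀ x, 0 ≤ p.eval x)
    (hpq : ∀ x, 0 ≤ (p * q).eval x) (x : ℝ) : 0 ≤ q.eval x := by
  have hdense : Dense {y | p.IsRoot y}ᶜ := (p.finite_setOfPred_isRoot hp).countable.dense_compl ℝ
  have hclosed : IsClosed {y | 0 ≤ q.eval y} := isClosed_le continuous_const q.continuous
  refine closure_minimal (fun y hy => ?_) hclosed (hdense x)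
  have hpy : 0 < p.eval y := (hp_nonneg y).lt_of_ne' hy
  exact nonneg_of_mul_nonneg_right (by simpa using hpq y) hpy

theorem sq_X_sub_C_dvd_of_isRoot_of_nonneg {p : ℝ[X]} (hp : ∀ x, 0 ≤ p.eval x) {a : ℝ}
    (ha : p.IsRoot a) : (X - C a) ^ 2 ∣ p := by
  rcases eq_or_ne p 0 with rfl | hp0
  · exact dvd_zero _
  have hmin : IsLocalMin (fun x => p.eval x) a :=
    Filter.Eventually.of_forall fun x => (ha : p.eval a = 0).trans_le (hp x)
  have hderiv : p.derivative.IsRoot a := by simpa using hmin.deriv_eq_zero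
  exact (le_rootMultiplicity_iff hp0).1
    ((one_lt_rootMultiplicity_iff_isRoot hp0).2 ⟨ha, hderiv⟩)

theorem exists_sq_add_sq_dvd_of_nonneg {p : ℝ[X]} (hp : ∀ x, 0 ≤ p.eval x)
    (hdeg : p.natDegree ≠ 0) : ∃ a b : ℝ, (X - C a) ^ 2 + C b ^ 2 ∣ p := by
  obtain ⟨z, hz⟩ := IsAlgClosed.exists_aeval_eq_zero ℂ p
    fun h => hdeg (natDegree_eq_of_degree_eq_some h)
  rcases eq_or_ne z.im 0 with him | him
  · obtain ⟨a, rfl⟩ : ∃ a : ℝ, (algebraMap ℝ ℂ a) = z := ⟨z.re, Complex.ext rfl him.symm⟩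
    rw [aeval_algebraMap_apply] at hz
    have ha : p.IsRoot a := by simpa using hz
    exact ⟨a, 0, by simpa using sq_X_sub_C_dvd_of_isRoot_of_nonneg hp ha⟩
  · refine ⟨z.re, z.im, ?_⟩
    convert p.quadratic_dvd_of_aeval_eq_zero_im_ne_zero hz him using 1
    rw [← Complex.normSq_eq_norm_sq, Complex.normSq_apply]
    simp only [map_mul, map_add, map_ofNat]
    ring

theorem exists_eq_sq_add_sq_of_nonneg (p : ℝ[X]) (hp : ∀ x, 0 ≤ p.eval x) :
    ∃ q r : ℝ[X], p = q ^ 2 + r ^ 2 := by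
  induction hn : p.natDegree using Nat.strong_induction_on generalizing p with
  | _ n ih =>
  rcases eq_or_ne n 0 with rfl | hn0
  · obtain ⟨c, rfl⟩ := natDegree_eq_zero.1 hn
    refine ⟨C √c, 0, ?_⟩
    rw [← C_pow, Real.sq_sqrt (by simpa using hp 0)]
    simp
  obtain ⟨a, b, k, rfl⟩ := exists_sq_add_sq_dvd_of_nonneg hp (hn ▸ hn0)
  have hdeg : ((X - C a) ^ 2 + C b ^ 2 : ℝ[X]).natDegree = 2 := by compute_degree!
  have hne : ((X - C a) ^ 2 + C b ^ 2 : ℝ[X]) ≠ 0 := ne_zero_of_natDegree_gt (n := 1) (by omega)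
  have hk0 : k ≠ 0 := by rintro rfl; simp_all
  have hfactor (x : ℝ) : 0 ≤ ((X - C a) ^ 2 + C b ^ 2 : ℝ[X]).eval x := by
    simp only [eval_add, eval_pow, eval_sub, eval_X, eval_C]
    positivity
  obtain ⟨q, r, hqr⟩ := ih k.natDegree (by rw [natDegree_mul hne hk0] at hn; omega) k
    (nonneg_eval_of_nonneg_eval_mul hne hfactor hp) rfl
  exact sq_add_sq_mul rfl hqr

section OrderUnit

variable {M : Type*} [AddCommGroup M] [Module ℝ M]

theorem nonneg_smul_mem (Q : Submodule ℝ≥0 M) {c : ℝ} (hc : 0 ≤ c) {q : M} (hq : q ∈ Q) :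
    c • q ∈ Q :=
  Q.smul_mem ⟨c, hc⟩ hq

theorem mem_of_two_smul_mem {Q : Submodule ℝ≥0 M} {q : M} (hq : (2 : ℝ) • q ∈ Q) : q ∈ Q := by
  simpa using nonneg_smul_mem Q (inv_nonneg.2 zero_le_two) hq

/-- `u` is an order unit of the convex cone `Q`: it lies in `Q` and some multiple of it dominates
any given vector. Cones are encoded as `ℝ≥0`-submodules. -/
structure IsOrderUnit (Q : Submodule ℝ≥0 M) (u : M) : Prop where
  mem : u ∈ Q
  exists_smul_sub_mem (y : M) : ∃ K : ℝ, K • u - y ∈ Q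

theorem IsOrderUnit.exists_pos_smul_sub_mem {Q : Submodule ℝ≥0 M} {u : M}
    (hu : IsOrderUnit Q u) (y : M) :
    ∃ K : ℝ, 0 < K ∧ K • u - y ∈ Q := by
  obtain ⟨K, hK⟩ := hu.exists_smul_sub_mem y
  refine ⟨max K 1, lt_max_of_lt_right one_pos, ?_⟩
  have hle : 0 ≤ max K 1 - K := sub_nonneg.2 (le_max_left K 1)
  convert Q.add_mem hK (nonneg_smul_mem Q hle hu.mem) using 1
  module

/-- The state space of the cone `Q` with order unit `u`: the linear functionals that are nonnegative
on `Q` and take the value `1` at `u`. It is a set of functions `M → ℝ`, so that its topology is that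
of pointwise convergence. -/
def stateSpace (Q : Submodule ℝ≥0 M) (u : M) : Set (M → ℝ) :=
  Set.range ((⇑) : (M →ₗ[ℝ] ℝ) → M → ℝ) ∩ {f | (∀ q ∈ Q, 0 ≤ f q) ∧ f u = 1}

theorem coe_mem_stateSpace {Q : Submodule ℝ≥0 M} {u : M} {φ : M →ₗ[ℝ] ℝ} :
    ⇑φ ∈ stateSpace Q u ↔ (∀ q ∈ Q, 0 ≤ φ q) ∧ φ u = 1 := by
  simp [stateSpace]

theorem convex_stateSpace (Q : Submodule ℝ≥0 M) (u : M) : Convex ℝ (stateSpace Q u) := by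
  rintro _ ⟨⟨φ, rfl⟩, hφ, hφu⟩ _ ⟨⟨ψ, rfl⟩, hψ, hψu⟩ a b ha hb hab
  refine ⟨⟨a • φ + b • ψ, rfl⟩, fun q hq => ?_, ?_⟩
  · exact add_nonneg (mul_nonneg ha (hφ q hq)) (mul_nonneg hb (hψ q hq))
  · simpa [hφu, hψu] using hab

theorem IsOrderUnit.isCompact_stateSpace {Q : Submodule ℝ≥0 M} {u : M} (hu : IsOrderUnit Q u) :
    IsCompact (stateSpace Q u) := by
  have hbound (y : M) : ∃ K, ∀ f ∈ stateSpace Q u, f y ∈ Set.Icc (-K) K := by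
    obtain ⟨K₁, h₁⟩ := hu.exists_smul_sub_mem y
    obtain ⟨K₂, h₂⟩ := hu.exists_smul_sub_mem (-y)
    refine ⟨max K₁ K₂, ?_⟩
    rintro _ ⟨⟨φ, rfl⟩, hφ, hφu⟩
    have h₁ := hφ _ h₁
    have h₂ := hφ _ h₂
    simp only [map_sub, map_smul, map_neg, hφu, smul_eq_mul, mul_one] at h₁ h₂
    constructor <;> linarith [le_max_left K₁ K₂, le_max_right K₁ K₂]
  choose K hK using hbound
  refine (isCompact_univ_pi fun y => isCompact_Icc).of_isClosed_subset ?_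
    fun f hf y _ => hK y f hf
  refine (LinearMap.isClosed_range_coe M ℝ (RingHom.id ℝ)).inter (.and ?_ ?_)
  · simp only [Set.ofPred_forall]
    exact isClosed_biInter fun q _ => isClosed_le continuous_const (continuous_apply q)
  · exact isClosed_eq (continuous_apply u) continuous_const

theorem eq_mul_of_add_eq_of_mem_extremePoints {Q : Submodule ℝ≥0 M} {u : M} (hu : u ∈ Q)
    {φ φ₁ φ₂ : M →ₗ[ℝ] ℝ} (hφ : ⇑φ ∈ (stateSpace Q u).extremePoints ℝ)
    (h₁ : ∀ q ∈ Q, 0 ≤ φ₁ q) (h₂ : ∀ q ∈ Q, 0 ≤ φ₂ q) (hadd : φ₁ + φ₂ = φ) (y : M) :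
    φ₁ y = φ₁ u * φ y := by
  obtain ⟨hφQ, hφu⟩ := coe_mem_stateSpace.1 hφ.1
  obtain ⟨s, hs⟩ : ∃ s, φ₁ u = s := ⟨_, rfl⟩
  have hs' : φ₂ u = 1 - s := by rw [← hs, ← hφu, ← hadd]; simp
  have hs0 : 0 ≤ s := hs ▸ h₁ u hu
  have hs1 : 0 ≤ 1 - s := hs' ▸ h₂ u hu
  -- Adding `φ` to both parts keeps the normalising constants away from zero.
  have hstate {ψ : M →ₗ[ℝ] ℝ} {c : ℝ} (hψ : ∀ q ∈ Q, 0 ≤ ψ q) (hc : 0 ≤ c) (hψu : ψ u = c) :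
      ⇑((1 + c)⁻¹ • (φ + ψ)) ∈ stateSpace Q u := by
    refine coe_mem_stateSpace.2 ⟨fun q hq => ?_, ?_⟩
    · have := add_nonneg (hφQ q hq) (hψ q hq)
      exact mul_nonneg (by positivity) this
    · simp only [LinearMap.smul_apply, LinearMap.add_apply, hφu, hψu, smul_eq_mul]
      field_simp
  have hmem : ⇑φ ∈ openSegment ℝ ⇑((1 + s)⁻¹ • (φ + φ₁)) ⇑((1 + (1 - s))⁻¹ • (φ + φ₂)) := by
    refine ⟨(1 + s) / 3, (1 + (1 - s)) / 3, by positivity, by positivity, by ring, ?_⟩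
    funext z
    have hz : φ₁ z + φ₂ z = φ z := by rw [← hadd]; rfl
    simp only [Pi.add_apply, Pi.smul_apply, LinearMap.smul_apply, LinearMap.add_apply, smul_eq_mul]
    field_simp
    linarith
  have heq := hφ.2 (hstate h₁ hs0 hs) (hstate h₂ hs1 hs') hmem
  have hy := congrFun heq y
  simp only [LinearMap.smul_apply, LinearMap.add_apply, smul_eq_mul] at hy
  field_simp at hy
  rw [hs]
  linarith

/-- The Krein–Milman theorem for the state space. -/
theorem IsOrderUnit.nonneg_of_forall_extremePoints {Q : Submodule ℝ≥0 M} {u : M}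
    (hu : IsOrderUnit Q u) {φ : M →ₗ[ℝ] ℝ} (hφ : ∀ q ∈ Q, 0 ≤ φ q) {y : M}
    (hy : ∀ ψ : M →ₗ[ℝ] ℝ, ⇑ψ ∈ (stateSpace Q u).extremePoints ℝ → 0 ≤ ψ y) : 0 ≤ φ y := by
  rcases (hφ u hu.mem).eq_or_lt with h0 | hpos
  · obtain ⟨K, hK⟩ := hu.exists_smul_sub_mem (-y)
    simpa [← h0] using hφ _ hK
  have hstate : ⇑((φ u)⁻¹ • φ) ∈ stateSpace Q u :=
    coe_mem_stateSpace.2 ⟨fun q hq => mul_nonneg (inv_nonneg.2 hpos.le) (hφ q hq),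
      inv_mul_cancel₀ hpos.ne'⟩
  have hhalf : closure (convexHull ℝ ((stateSpace Q u).extremePoints ℝ)) ⊆ {f | 0 ≤ f y} := by
    refine closure_minimal (convexHull_min ?_ ?_)
      (isClosed_le continuous_const (continuous_apply y))
    · intro f hf
      obtain ⟨ψ, rfl⟩ := hf.1.1
      exact hy ψ hf
    · exact convex_halfSpace_ge (LinearMap.proj y : (M → ℝ) →ₗ[ℝ] ℝ).isLinear 0
  rw [closure_convexHull_extremePoints hu.isCompact_stateSpace (convex_stateSpace Q u)] at hhalf
  exact nonneg_of_mul_nonneg_right (hhalf hstate) (inv_pos.2 hpos)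

end OrderUnit

section ArchimedeanModule

variable {R M : Type*} [CommRing R] [Algebra ℝ R] [AddCommGroup M] [Module ℝ M] [Module R M]
  [IsScalarTower ℝ R M] {T : Subalgebra ℝ≥0 R} {Q : Submodule ℝ≥0 M} {u : M}

theorem map_smul_eq_mul_of_mem_extremePoints (hT : IsOrderUnit T.toSubmodule 1)
    (hTQ : ∀ a ∈ T, ∀ q ∈ Q, a • q ∈ Q) (hu : u ∈ Q) {φ : M →ₗ[ℝ] ℝ}
    (hφ : ⇑φ ∈ (stateSpace Q u).extremePoints ℝ) (a : R) (y : M) :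
    φ (a • y) = φ (a • u) * φ y := by
  obtain ⟨hφQ, hφu⟩ := coe_mem_stateSpace.1 hφ.1
  have hunit {b : R} (hb : b ∈ T) (hb' : 1 - b ∈ T) : φ (b • y) = φ (b • u) * φ y := by
    refine eq_mul_of_add_eq_of_mem_extremePoints hu hφ (φ₁ := φ ∘ₗ Algebra.lsmul ℝ ℝ M b)
      (φ₂ := φ ∘ₗ Algebra.lsmul ℝ ℝ M (1 - b)) (fun q hq => hφQ _ (hTQ b hb q hq))
      (fun q hq => hφQ _ (hTQ (1 - b) hb' q hq)) ?_ y
    rw [← LinearMap.comp_add, ← map_add, add_sub_cancel, map_one]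
    rfl
  have hcone {b : R} (hb : b ∈ T) : φ (b • y) = φ (b • u) * φ y := by
    obtain ⟨K, hK, hKb⟩ := hT.exists_pos_smul_sub_mem b
    have hcompl : 1 - K⁻¹ • b = K⁻¹ • (K • 1 - b) := by rw [smul_sub, inv_smul_smul₀ hK.ne']
    have h := hunit (nonneg_smul_mem T.toSubmodule (inv_pos.2 hK).le hb)
      (hcompl ▸ nonneg_smul_mem T.toSubmodule (inv_pos.2 hK).le hKb)
    simp only [smul_assoc, map_smul, smul_eq_mul] at h
    field_simp at h
    exact h
  obtain ⟨K, hK⟩ := hT.exists_smul_sub_mem a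
  have h := hcone hK
  simp only [sub_smul, smul_assoc, one_smul, map_sub, map_smul, smul_eq_mul, hφu] at h
  linarith

theorem exists_algHom_of_mem_extremePoints (hT : IsOrderUnit T.toSubmodule 1)
    (hTQ : ∀ a ∈ T, ∀ q ∈ Q, a • q ∈ Q) (hu : u ∈ Q) {φ : M →ₗ[ℝ] ℝ}
    (hφ : ⇑φ ∈ (stateSpace Q u).extremePoints ℝ) :
    ∃ χ : R →ₐ[ℝ] ℝ, (∀ a ∈ T, 0 ≤ χ a) ∧ ∀ a y, φ (a • y) = χ a * φ y := by
  obtain ⟨hφQ, hφu⟩ := coe_mem_stateSpace.1 hφ.1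
  have hmul := map_smul_eq_mul_of_mem_extremePoints hT hTQ hu hφ
  refine ⟨AlgHom.ofLinearMap (φ ∘ₗ (LinearMap.toSpanSingleton R M u).restrictScalars ℝ) ?_ ?_,
    fun a ha => hφQ _ (hTQ a ha u hu), hmul⟩
  · simpa using hφu
  · intro a b
    simpa [mul_smul] using hmul a (b • u)

/-- Positivity over an archimedean cone `T` of scalars can be tested on the functionals on which
the scalars act through a character. -/
theorem IsOrderUnit.nonneg_of_forall_character (hu : IsOrderUnit Q u)
    (hT : IsOrderUnit T.toSubmodule 1) (hTQ : ∀ a ∈ T, ∀ q ∈ Q, a • q ∈ Q) {φ : M →ₗ[ℝ] ℝ}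
    (hφ : ∀ q ∈ Q, 0 ≤ φ q) {y : M}
    (hy : ∀ (χ : R →ₐ[ℝ] ℝ) (ψ : M →ₗ[ℝ] ℝ), (∀ a ∈ T, 0 ≤ χ a) → (∀ q ∈ Q, 0 ≤ ψ q) →
      (∀ a z, ψ (a • z) = χ a * ψ z) → 0 ≤ ψ y) : 0 ≤ φ y := by
  refine hu.nonneg_of_forall_extremePoints hφ fun ψ hψ => ?_
  obtain ⟨χ, hχT, hχ⟩ := exists_algHom_of_mem_extremePoints hT hTQ hu.mem hψ
  exact hy χ ψ hχT (coe_mem_stateSpace.1 hψ.1).1 hχ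

end ArchimedeanModule

section SumsOfSquares

variable {R : Type*} [CommRing R] [Algebra ℝ R]

/-- The sums of squares of an `ℝ`-algebra, as a multiplicative convex cone. -/
def sumSqCone (R : Type*) [CommRing R] [Algebra ℝ R] : Subalgebra ℝ≥0 R where
  __ := Subsemiring.sumSq R
  algebraMap_mem' c := by
    have h : algebraMap ℝ≥0 R c = algebraMap ℝ R √c * algebraMap ℝ R √c := by
      rw [← map_mul, Real.mul_self_sqrt c.coe_nonneg]
      rfl
    rw [h]
    exact Subsemiring.mem_sumSq.2 (IsSumSq.mul_self _)

theorem mem_sumSqCone {a : R} : a ∈ sumSqCone R ↔ IsSumSq a :=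
  Subsemiring.mem_sumSq

theorem isOrderUnit_one_of_adjoin_eq_top {T : Subalgebra ℝ≥0 R} {s : Set R}
    (hs : Algebra.adjoin ℝ s = ⊤) (hbdd : ∀ x ∈ s, ∃ K : ℝ, K • 1 - x ∈ T ∧ K • 1 + x ∈ T) :
    IsOrderUnit T.toSubmodule 1 := by
  refine ⟨T.one_mem, fun y => ?_⟩
  suffices h : ∃ K : ℝ, K • 1 - y ∈ T ∧ K • 1 + y ∈ T from h.imp fun K hK => hK.1
  have hy : y ∈ Algebra.adjoin ℝ s := hs ▸ Algebra.mem_top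
  induction hy using Algebra.adjoin_induction with
  | mem x hx => exact hbdd x hx
  | algebraMap c =>
    have hmem {t : ℝ} (ht : 0 ≤ t) : t • (1 : R) ∈ T :=
      nonneg_smul_mem T.toSubmodule ht T.one_mem
    rw [Algebra.algebraMap_eq_smul_one]
    refine ⟨|c|, ?_, ?_⟩
    · simpa only [← sub_smul] using hmem (sub_nonneg.2 (le_abs_self c))
    · simpa only [← add_smul] using hmem (neg_le_iff_add_nonneg.1 (neg_le_abs c))
  | add a b _ _ iha ihb =>
    obtain ⟨K, hK, hK'⟩ := iha
    obtain ⟨N, hN, hN'⟩ := ihb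
    refine ⟨K + N, ?_, ?_⟩
    · convert T.add_mem hK hN using 1
      module
    · convert T.add_mem hK' hN' using 1
      module
  | mul a b _ _ iha ihb =>
    obtain ⟨K, hK, hK'⟩ := iha
    obtain ⟨N, hN, hN'⟩ := ihb
    refine ⟨K * N, mem_of_two_smul_mem (Q := T.toSubmodule) (T.mem_toSubmodule.2 ?_),
      mem_of_two_smul_mem (Q := T.toSubmodule) (T.mem_toSubmodule.2 ?_)⟩
    · convert T.add_mem (T.mul_mem hK hN') (T.mul_mem hK' hN) using 1
      simp only [Algebra.smul_def, map_mul, map_ofNat]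
      ring
    · convert T.add_mem (T.mul_mem hK hN) (T.mul_mem hK' hN') using 1
      simp only [Algebra.smul_def, map_mul, map_ofNat]
      ring

theorem isOrderUnit_sumSqCone_one {ι : Type*} [Fintype ι] {x : ι → R} (hx : ∑ i, x i ^ 2 = 1)
    (hadj : Algebra.adjoin ℝ (Set.range x) = ⊤) : IsOrderUnit (sumSqCone R).toSubmodule 1 := by
  classical
  refine isOrderUnit_one_of_adjoin_eq_top hadj ?_
  rintro _ ⟨i, rfl⟩
  have hrest : IsSumSq (∑ j ∈ Finset.univ.erase i, x j ^ 2) :=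
    IsSumSq.sum fun j _ => (IsSquare.sq (x j)).isSumSq
  have hbound {y : R} (hy : y ^ 2 = x i ^ 2) : (1 : ℝ) • 1 - y ∈ sumSqCone R := by
    have hsum : (2 : ℝ) • (1 - y) = (1 - y) ^ 2 + ∑ j ∈ Finset.univ.erase i, x j ^ 2 := by
      rw [← Finset.add_sum_erase _ _ (Finset.mem_univ i), ← hy] at hx
      rw [Algebra.smul_def, map_ofNat]
      linear_combination -hx
    rw [one_smul]
    refine mem_of_two_smul_mem (Q := (sumSqCone R).toSubmodule) ?_
    exact hsum ▸ mem_sumSqCone.2 ((IsSquare.sq (1 - y)).isSumSq.add hrest)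
  exact ⟨1, hbound rfl, by simpa using hbound (neg_sq (x i))⟩

end SumsOfSquares

section PolynomialCone

theorem mem_degreeLT_succ {R : Type*} [Semiring R] {n : ℕ} {f : R[X]} :
    f ∈ degreeLT R (n + 1) ↔ f.natDegree ≤ n := by
  rw [degreeLT_succ_eq_degreeLE, mem_degreeLE, natDegree_le_iff_degree_le]

variable {R : Type*} [CommRing R] [Algebra ℝ R]

/-- The convex cone in `R[X]` generated by the products of elements of the cone `T` of constants
with real polynomials that are nonnegative on the line. -/
noncomputable def productCone (T : Subalgebra ℝ≥0 R) : Submodule ℝ≥0 R[X] :=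
  Submodule.span ℝ≥0
    {f | ∃ a ∈ T, ∃ p : ℝ[X], (∀ x, 0 ≤ p.eval x) ∧ a • p.map (algebraMap ℝ R) = f}

variable {T : Subalgebra ℝ≥0 R}

theorem smul_map_mem_productCone {a : R} (ha : a ∈ T) {p : ℝ[X]} (hp : ∀ x, 0 ≤ p.eval x) :
    a • p.map (algebraMap ℝ R) ∈ productCone T :=
  Submodule.subset_span ⟨a, ha, p, hp, rfl⟩

theorem smul_mem_productCone {a : R} (ha : a ∈ T) {f : R[X]} (hf : f ∈ productCone T) :
    a • f ∈ productCone T := by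
  induction hf using Submodule.span_induction with
  | mem f hf =>
    obtain ⟨b, hb, p, hp, rfl⟩ := hf
    rw [smul_smul]
    exact smul_map_mem_productCone (T.mul_mem ha hb) hp
  | zero => simp
  | add f g _ _ hf hg => simpa using add_mem hf hg
  | smul c f _ hf => simpa only [smul_comm a c f] using Submodule.smul_mem _ c hf

theorem abs_pow_le_one_add_pow {n m : ℕ} (h : n ≤ 2 * m) (x : ℝ) : |x ^ n| ≤ 1 + x ^ (2 * m) := by
  rw [abs_pow, ← (even_two_mul m).pow_abs]
  rcases le_total |x| 1 with hx | hx
  · exact (pow_le_one₀ (abs_nonneg x) hx).trans (by simp)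
  · exact (pow_le_pow_right₀ hx h).trans (by simp)

theorem exists_smul_sub_C_mul_X_pow_mem_productCone (hT : IsOrderUnit T.toSubmodule 1) (a : R)
    {n m : ℕ} (h : n ≤ 2 * m) :
    ∃ K : ℝ, K • (1 + X ^ (2 * m)) - C a * X ^ n ∈ productCone T := by
  obtain ⟨c, hc, hca⟩ := hT.exists_pos_smul_sub_mem (-a)
  obtain ⟨k, hka⟩ := hT.exists_smul_sub_mem a
  have hbound (x : ℝ) := abs_le.1 (abs_pow_le_one_add_pow h x)
  have hsub : ∀ x : ℝ, 0 ≤ (1 + X ^ (2 * m) - X ^ n : ℝ[X]).eval x := fun x => by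
    simpa using (hbound x).2
  have hadd : ∀ x : ℝ, 0 ≤ (1 + X ^ (2 * m) + X ^ n : ℝ[X]).eval x := fun x => by
    simpa using neg_le_iff_add_nonneg'.1 (hbound x).1
  have hunit : ∀ x : ℝ, 0 ≤ (1 + X ^ (2 * m) : ℝ[X]).eval x := fun x => by
    simpa using (abs_nonneg _).trans (abs_pow_le_one_add_pow h x)
  have h₁ := smul_map_mem_productCone hca hsub
  have h₂ := smul_map_mem_productCone hka hunit
  have h₃ := nonneg_smul_mem _ hc.le (smul_map_mem_productCone T.one_mem hadd)
  refine ⟨2 * c + k, ?_⟩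
  convert add_mem (add_mem h₁ h₂) h₃ using 1
  simp only [Polynomial.map_add, Polynomial.map_sub, Polynomial.map_one, Polynomial.map_pow, map_X,
    Algebra.smul_def, Polynomial.algebraMap_apply, Algebra.algebraMap_self, RingHom.id_apply,
    map_sub, map_mul, map_neg, map_one, map_add, map_ofNat]
  ring

theorem exists_smul_sub_mem_productCone (hT : IsOrderUnit T.toSubmodule 1) {m : ℕ} (f : R[X])
    (hf : f.natDegree ≤ 2 * m) :
    ∃ K : ℝ, K • (1 + X ^ (2 * m)) - f ∈ productCone T := by
  have hmono (n : ℕ) : ∃ K : ℝ, n ∈ Finset.range (2 * m + 1) →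
      K • (1 + X ^ (2 * m)) - C (f.coeff n) * X ^ n ∈ productCone T := by
    by_cases hn : n ≤ 2 * m
    · exact (exists_smul_sub_C_mul_X_pow_mem_productCone hT (f.coeff n) hn).imp fun _ h _ => h
    · exact ⟨0, fun h => absurd (Finset.mem_range_succ_iff.1 h) hn⟩
  choose K hK using hmono
  refine ⟨∑ n ∈ Finset.range (2 * m + 1), K n, ?_⟩
  convert sum_mem hK using 1
  rw [Finset.sum_sub_distrib, ← Finset.sum_smul,
    ← f.as_sum_range_C_mul_X_pow' (Nat.lt_succ_of_le hf)]

theorem map_nonneg_of_mem_productCone {Λ : R[X] →ₗ[ℝ] ℝ}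
    (hΛ : ∀ a ∈ T, ∀ p : ℝ[X], 0 ≤ Λ (a • p.map (algebraMap ℝ R) ^ 2)) {f : R[X]}
    (hf : f ∈ productCone T) : 0 ≤ Λ f := by
  induction hf using Submodule.span_induction with
  | mem f hf =>
    obtain ⟨a, ha, p, hp, rfl⟩ := hf
    obtain ⟨q, r, rfl⟩ := exists_eq_sq_add_sq_of_nonneg p hp
    simpa [smul_add] using add_nonneg (hΛ a ha q) (hΛ a ha r)
  | zero => simp
  | add f g _ _ hf hg => simpa using add_nonneg hf hg
  | smul c f _ hf =>
    rw [NNReal.smul_def, map_smul]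
    exact smul_nonneg c.2 hf

/-- The elements of `productCone T` of degree less than `n`. -/
noncomputable def productConeLT (T : Subalgebra ℝ≥0 R) (n : ℕ) : Submodule ℝ≥0 (degreeLT R n) :=
  (productCone T).comap ((degreeLT R n).subtype.restrictScalars ℝ≥0)

theorem mem_productConeLT {n : ℕ} {f : degreeLT R n} :
    f ∈ productConeLT T n ↔ (f : R[X]) ∈ productCone T :=
  Iff.rfl

theorem exists_isOrderUnit_productConeLT (hT : IsOrderUnit T.toSubmodule 1) (m : ℕ) :
    ∃ u, IsOrderUnit (productConeLT T (2 * m + 1)) u := by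
  have hdeg : (1 + X ^ (2 * m) : R[X]).natDegree ≤ 2 * m := by compute_degree
  refine ⟨⟨1 + X ^ (2 * m), mem_degreeLT_succ.2 hdeg⟩, ?_, fun f => ?_⟩
  · have hnonneg : ∀ x : ℝ, 0 ≤ (1 + X ^ (2 * m) : ℝ[X]).eval x := fun x => by
      simpa using (abs_nonneg _).trans (abs_pow_le_one_add_pow le_rfl x)
    simpa [mem_productConeLT] using smul_map_mem_productCone T.one_mem hnonneg
  · exact exists_smul_sub_mem_productCone hT f (mem_degreeLT_succ.1 f.2)

theorem eq_of_forall_character_coeff_eq {n : ℕ} {ψ : degreeLT R n →ₗ[ℝ] ℝ} {χ : R →ₐ[ℝ] ℝ}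
    (hψ : ∀ a f, ψ (a • f) = χ a * ψ f) {f g : degreeLT R n}
    (hfg : ∀ i, χ ((f : R[X]).coeff i) = χ ((g : R[X]).coeff i)) : ψ f = ψ g := by
  rw [← (degreeLT.basis R n).sum_repr f, ← (degreeLT.basis R n).sum_repr g]
  simp only [map_sum, hψ, degreeLT.basis_repr, hfg]

/-- The extreme functionals on polynomials of bounded degree see the constants only through a
character, so they reduce positivity to the real polynomials `f.map χ`. -/
theorem nonneg_of_forall_character_eval_nonneg (hT : IsOrderUnit T.toSubmodule 1)
    {Λ : R[X] →ₗ[ℝ] ℝ} (hΛ : ∀ a ∈ T, ∀ p : ℝ[X], 0 ≤ Λ (a • p.map (algebraMap ℝ R) ^ 2))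
    {f : R[X]} (hf : ∀ χ : R →ₐ[ℝ] ℝ, (∀ a ∈ T, 0 ≤ χ a) →
      ∀ x, 0 ≤ (f.map (χ : R →+* ℝ)).eval x) : 0 ≤ Λ f := by
  obtain ⟨u, hu⟩ := exists_isOrderUnit_productConeLT hT f.natDegree
  have hdeg {g : R[X]} (hg : g.natDegree ≤ f.natDegree) :
      g ∈ degreeLT R (2 * f.natDegree + 1) :=
    mem_degreeLT_succ.2 (by omega)
  refine hu.nonneg_of_forall_character hT (fun a ha g hg => smul_mem_productCone ha hg)
    (φ := Λ ∘ₗ (degreeLT R (2 * f.natDegree + 1)).subtype.restrictScalars ℝ)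
    (fun g hg => map_nonneg_of_mem_productCone hΛ hg) (y := ⟨f, hdeg le_rfl⟩)
    fun χ ψ hχT hψQ hψ => ?_
  have hfiber : ψ ⟨f, hdeg le_rfl⟩ = ψ ⟨(f.map (χ : R →+* ℝ)).map (algebraMap ℝ R),
      hdeg (natDegree_map_le.trans natDegree_map_le)⟩ :=
    eq_of_forall_character_coeff_eq hψ fun i => by simp
  rw [hfiber]
  apply hψQ
  simpa [mem_productConeLT] using smul_map_mem_productCone T.one_mem (hf χ hχT)

end PolynomialCone

theorem exists_extension_of_cofinal {P V : Type*} [AddCommGroup P] [Module ℝ P] [AddCommGroup V]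
    [Module ℝ V] (s : PointedCone ℝ V) (e : P →ₗ[ℝ] V) {Λ : P →ₗ[ℝ] ℝ}
    (hΛ : ∀ p, e p ∈ s → 0 ≤ Λ p) (hcof : ∀ v, ∃ p, e p + v ∈ s) :
    ∃ G : V →ₗ[ℝ] ℝ, (∀ p, G (e p) = Λ p) ∧ ∀ v ∈ s, 0 ≤ G v := by
  have hker {p : P} (hp : e p = 0) : Λ p = 0 := by
    refine le_antisymm ?_ (hΛ p (hp ▸ s.zero_mem))
    simpa using hΛ (-p) (by simp [hp])
  obtain ⟨σ, hσ⟩ := e.rangeRestrict.exists_rightInverse_of_surjective e.range_rangeRestrict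
  have heσ (v : e.range) : e (σ v) = v := congrArg Subtype.val (LinearMap.congr_fun hσ v)
  obtain ⟨G, hG, hGs⟩ := riesz_extension s ⟨e.range, Λ ∘ₗ σ⟩
    (fun v hv => hΛ _ ((heσ v).symm ▸ hv))
    (fun v => (hcof v).imp' e.rangeRestrict fun _ => id)
  refine ⟨G, fun p => (hG (e.rangeRestrict p)).trans ?_, hGs⟩
  rw [← sub_eq_zero]
  exact (map_sub Λ _ _).symm.trans (hker (by rw [map_sub, heσ]; exact sub_self _))

theorem integrable_and_integral_eq_of_tendsto_of_monotone {Y : Type*} [MeasurableSpace Y]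
    {μ : Measure Y} {F : ℕ → Y → ℝ} {g : Y → ℝ} {c : ℝ} (hF : ∀ n, Integrable (F n) μ)
    (hF0 : ∀ n y, 0 ≤ F n y) (hmono : ∀ y, Monotone fun n => F n y)
    (hlim : ∀ y, Tendsto (fun n => F n y) atTop (𝓝 (g y)))
    (hint : Tendsto (fun n => ∫ y, F n y ∂μ) atTop (𝓝 c)) :
    Integrable g μ ∧ ∫ y, g y ∂μ = c := by
  have hg0 (y : Y) : 0 ≤ g y := ge_of_tendsto' (hlim y) fun n => hF0 n y
  have hc0 : 0 ≤ c := ge_of_tendsto' hint fun n => integral_nonneg (hF0 n)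
  have hg : AEStronglyMeasurable g μ :=
    aestronglyMeasurable_of_tendsto_ae atTop (fun n => (hF n).1) (ae_of_all _ hlim)
  have hlintegral : ∫⁻ y, ENNReal.ofReal (g y) ∂μ = ENNReal.ofReal c := by
    have h := lintegral_tendsto_of_tendsto_of_monotone (μ := μ)
      (fun n => (hF n).1.aemeasurable.ennreal_ofReal)
      (ae_of_all _ fun y _ _ h => ENNReal.ofReal_le_ofReal (hmono y h))
      (ae_of_all _ fun y => ENNReal.tendsto_ofReal (hlim y))
    simp only [← ofReal_integral_eq_lintegral_ofReal (hF _) (ae_of_all _ (hF0 _))] at h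
    exact tendsto_nhds_unique h (ENNReal.tendsto_ofReal hint)
  refine ⟨⟨hg, (hasFiniteIntegral_iff_ofReal (ae_of_all _ hg0)).2 ?_⟩, ?_⟩
  · exact hlintegral ▸ ENNReal.ofReal_lt_top
  · rw [integral_eq_lintegral_of_nonneg_ae (ae_of_all _ hg0) hg, hlintegral,
      ENNReal.toReal_ofReal hc0]

section Haviland

variable {Y P : Type*} [TopologicalSpace Y] [CommRing P] [Algebra ℝ P]

/-- The real functions on `Y` dominated in absolute value by some `ev p`. -/
def dominatedFunctions (ev : P →ₐ[ℝ] C(Y, ℝ)) : Submodule ℝ (Y → ℝ) where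
  carrier := {f | ∃ p, ∀ y, |f y| ≤ ev p y}
  zero_mem' := ⟨0, by simp⟩
  add_mem' := by
    rintro f g ⟨p, hp⟩ ⟨q, hq⟩
    exact ⟨p + q, fun y => (abs_add_le _ _).trans (by simpa using add_le_add (hp y) (hq y))⟩
  smul_mem' := by
    rintro c f ⟨p, hp⟩
    refine ⟨|c| • p, fun y => ?_⟩
    simpa [abs_mul] using mul_le_mul_of_nonneg_left (hp y) (abs_nonneg c)

variable {ev : P →ₐ[ℝ] C(Y, ℝ)}

theorem coe_mem_dominatedFunctions (p : P) : ⇑(ev p) ∈ dominatedFunctions ev := by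
  refine ⟨1 + p ^ 2, fun y => ?_⟩
  simp only [map_add, map_one, map_pow, ContinuousMap.add_apply, ContinuousMap.one_apply,
    ContinuousMap.pow_apply]
  exact abs_le.2 ⟨by nlinarith [sq_nonneg (ev p y + 1)], by nlinarith [sq_nonneg (ev p y - 1)]⟩

theorem coe_compactlySupported_mem_dominatedFunctions (f : C_c(Y, ℝ)) :
    ⇑f ∈ dominatedFunctions ev := by
  obtain ⟨B, hB⟩ := f.hasCompactSupport.exists_bound_of_continuous f.continuous
  exact ⟨algebraMap ℝ P B, fun y => by simpa using hB y⟩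

theorem exists_positive_extension_dominatedFunctions {Λ : P →ₗ[ℝ] ℝ}
    (hΛ : ∀ p, (∀ y, 0 ≤ ev p y) → 0 ≤ Λ p) :
    ∃ G : dominatedFunctions ev →ₗ[ℝ] ℝ,
      (∀ p, G ⟨ev p, coe_mem_dominatedFunctions p⟩ = Λ p) ∧ ∀ f, 0 ≤ f.1 → 0 ≤ G f := by
  let e : P →ₗ[ℝ] dominatedFunctions ev :=
    { toFun := fun p => ⟨ev p, coe_mem_dominatedFunctions p⟩
      map_add' := fun p q => by ext; simp
      map_smul' := fun c p => by ext; simp }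
  refine exists_extension_of_cofinal
    ((PointedCone.positive ℝ (Y → ℝ)).comap (dominatedFunctions ev).subtype) e
    (fun p hp => hΛ p hp) ?_
  rintro ⟨f, p, hp⟩
  exact ⟨p, fun y => neg_le_iff_add_nonneg.1 ((neg_le_abs (f y)).trans (hp y))⟩

/-- A continuous cutoff function, supported where `w ^ 2 ≤ n + 1` and increasing to `1` with `n`. -/
noncomputable def cutoff (w : C(Y, ℝ)) (n : ℕ) : C(Y, ℝ) where
  toFun y := max 0 (1 - w y ^ 2 / (n + 1))

variable {w : C(Y, ℝ)}

theorem cutoff_apply (n : ℕ) (y : Y) : cutoff w n y = max 0 (1 - w y ^ 2 / (n + 1)) :=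
  rfl

theorem cutoff_nonneg (n : ℕ) (y : Y) : 0 ≤ cutoff w n y :=
  le_max_left _ _

theorem cutoff_le_one (n : ℕ) (y : Y) : cutoff w n y ≤ 1 :=
  max_le zero_le_one (sub_le_self _ (by positivity))

theorem one_sub_div_le_cutoff (n : ℕ) (y : Y) : 1 - w y ^ 2 / (n + 1) ≤ cutoff w n y :=
  le_max_right _ _

theorem monotone_cutoff (y : Y) : Monotone fun n => cutoff w n y := by
  intro m n hmn
  simp only [cutoff_apply]
  gcongr

theorem tendsto_cutoff (y : Y) : Tendsto (fun n => cutoff w n y) atTop (𝓝 1) := by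
  have h : Tendsto (fun n : ℕ => max 0 (1 - w y ^ 2 * (1 / ((n : ℝ) + 1)))) atTop
      (𝓝 (max 0 (1 - w y ^ 2 * 0))) :=
    tendsto_const_nhds.max
      (tendsto_const_nhds.sub (tendsto_one_div_add_atTop_nhds_zero_nat.const_mul _))
  simpa [cutoff_apply, div_eq_mul_inv] using h

theorem hasCompactSupport_mul_cutoff [R1Space Y] (hw : IsProperMap w) (g : C(Y, ℝ)) (n : ℕ) :
    HasCompactSupport (g * cutoff w n) := by
  refine HasCompactSupport.intro
    (hw.isCompact_preimage (isCompact_Icc (a := -√(n + 1)) (b := √(n + 1)))) fun y hy => ?_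
  have hwy : (n : ℝ) + 1 < w y ^ 2 := lt_of_not_ge fun h => hy (abs_le.1 (Real.abs_le_sqrt h))
  have hzero : cutoff w n y = 0 :=
    max_eq_left (sub_nonpos.2 ((one_le_div (by positivity)).2 hwy.le))
  simp [hzero]

variable [T2Space Y] [MeasurableSpace Y] [BorelSpace Y]

theorem integrable_and_integral_eq_of_nonneg {Λ : P →ₗ[ℝ] ℝ} {μ : Measure Y}
    [IsFiniteMeasureOnCompacts μ] (hμ : ∀ (f : C_c(Y, ℝ)) (p : P),
      ((∀ y, f y ≤ ev p y) → ∫ y, f y ∂μ ≤ Λ p) ∧ ((∀ y, ev p y ≤ f y) → Λ p ≤ ∫ y, f y ∂μ))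
    {w : P} (hw : IsProperMap (ev w)) {g : P} (hg : ∀ y, 0 ≤ ev g y) :
    Integrable (ev g) μ ∧ ∫ y, ev g y ∂μ = Λ g := by
  let F (n : ℕ) : C_c(Y, ℝ) :=
    ⟨ev g * cutoff (ev w) n, hasCompactSupport_mul_cutoff hw (ev g) n⟩
  have hF (n : ℕ) (y : Y) : F n y = ev g y * cutoff (ev w) n y := rfl
  have hupper (n : ℕ) : ∫ y, F n y ∂μ ≤ Λ g :=
    (hμ (F n) g).1 fun y => mul_le_of_le_one_right (hg y) (cutoff_le_one n y)
  have hlower (n : ℕ) : Λ g - 1 / ((n : ℝ) + 1) * Λ (g * w ^ 2) ≤ ∫ y, F n y ∂μ := by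
    have h := (hμ (F n) (g - (1 / ((n : ℝ) + 1)) • (g * w ^ 2))).2 fun y => by
      have := mul_le_mul_of_nonneg_left (one_sub_div_le_cutoff (w := ev w) n y) (hg y)
      refine le_of_eq_of_le ?_ this
      simp only [map_sub, map_smul, map_mul, map_pow, ContinuousMap.sub_apply,
        ContinuousMap.smul_apply, ContinuousMap.mul_apply, ContinuousMap.pow_apply, smul_eq_mul]
      ring
    simpa using h
  have hlim : Tendsto (fun n : ℕ => Λ g - 1 / ((n : ℝ) + 1) * Λ (g * w ^ 2)) atTop (𝓝 (Λ g)) := by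
    simpa using (tendsto_one_div_add_atTop_nhds_zero_nat (𝕜 := ℝ)).mul_const (Λ (g * w ^ 2))
      |>.const_sub (Λ g)
  exact integrable_and_integral_eq_of_tendsto_of_monotone
    (fun n => (F n).continuous.integrable_of_hasCompactSupport (F n).hasCompactSupport)
    (fun n y => mul_nonneg (hg y) (cutoff_nonneg n y))
    (fun y => (monotone_cutoff y).const_mul (hg y))
    (fun y => by simpa [hF] using ((tendsto_cutoff (w := ev w) y).const_mul (ev g y)))
    (tendsto_of_tendsto_of_tendsto_of_le_of_le hlim tendsto_const_nhds hlower hupper)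

variable [LocallyCompactSpace Y]

theorem exists_measure_integral_between {Λ : P →ₗ[ℝ] ℝ}
    (hΛ : ∀ p, (∀ y, 0 ≤ ev p y) → 0 ≤ Λ p) :
    ∃ μ : Measure Y, IsFiniteMeasureOnCompacts μ ∧ ∀ (f : C_c(Y, ℝ)) (p : P),
      ((∀ y, f y ≤ ev p y) → ∫ y, f y ∂μ ≤ Λ p) ∧ ((∀ y, ev p y ≤ f y) → Λ p ≤ ∫ y, f y ∂μ) := by
  obtain ⟨G, hGev, hG⟩ := exists_positive_extension_dominatedFunctions hΛ
  have hmono {f g : dominatedFunctions ev} (hfg : f.1 ≤ g.1) : G f ≤ G g := by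
    simpa using hG (g - f) (sub_nonneg.2 hfg)
  let Gc : C_c(Y, ℝ) →ₚ[ℝ] ℝ := PositiveLinearMap.mk₀
    { toFun := fun f => G ⟨f, coe_compactlySupported_mem_dominatedFunctions f⟩
      map_add' := fun f g => G.map_add ⟨f, _⟩ ⟨g, _⟩
      map_smul' := fun c f => G.map_smul c ⟨f, _⟩ }
    fun f hf => hG _ hf
  refine ⟨RealRMK.rieszMeasure Gc, inferInstance, fun f p => ?_⟩
  rw [RealRMK.integral_rieszMeasure, ← hGev]
  exact ⟨fun h => hmono h, fun h => hmono h⟩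

/-- Haviland's theorem, for an algebra of continuous functions containing a proper one. -/
theorem exists_measure_integral_eq_of_isProperMap {Λ : P →ₗ[ℝ] ℝ}
    (hΛ : ∀ p, (∀ y, 0 ≤ ev p y) → 0 ≤ Λ p) {w : P} (hw : IsProperMap (ev w)) :
    ∃ μ : Measure Y, ∀ p, Integrable (ev p) μ ∧ ∫ y, ev p y ∂μ = Λ p := by
  obtain ⟨μ, _, hμ⟩ := exists_measure_integral_between hΛ
  refine ⟨μ, fun p => ?_⟩
  obtain ⟨hi, he⟩ := integrable_and_integral_eq_of_nonneg hμ hw (g := 1 + p ^ 2 + p) fun y => by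
    simp only [map_add, map_one, map_pow, ContinuousMap.add_apply, ContinuousMap.one_apply,
      ContinuousMap.pow_apply]
    nlinarith [sq_nonneg (ev p y + 1)]
  obtain ⟨hi', he'⟩ := integrable_and_integral_eq_of_nonneg hμ hw (g := 1 + p ^ 2) fun y => by
    simp only [map_add, map_one, map_pow, ContinuousMap.add_apply, ContinuousMap.one_apply,
      ContinuousMap.pow_apply]
    positivity
  have hdiff : ⇑(ev p) = fun y => ev (1 + p ^ 2 + p) y - ev (1 + p ^ 2) y := by
    ext y
    simp
  rw [hdiff]
  refine ⟨hi.sub hi', ?_⟩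
  rw [integral_sub hi hi', he, he', ← map_sub, add_sub_cancel_left]

end Haviland

section CylinderEval

variable {K R : Type*} [TopologicalSpace K] [CommRing R] [Algebra ℝ R]

/-- Polynomials over an algebra of functions on `K`, as functions on the cylinder `ℝ × K`; the
variable `X` is the coordinate on `ℝ`. -/
noncomputable def cylinderEval (φ : R →ₐ[ℝ] C(K, ℝ)) : R[X] →ₐ[ℝ] C(ℝ × K, ℝ) :=
  aevalTower ((ContinuousMap.compRightAlgHom ℝ ℝ ContinuousMap.snd).comp φ) ContinuousMap.fst

variable (φ : R →ₐ[ℝ] C(K, ℝ))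

theorem cylinderEval_X : cylinderEval φ X = ContinuousMap.fst :=
  aevalTower_X _ _

theorem cylinderEval_C (a : R) : cylinderEval φ (C a) = (φ a).comp ContinuousMap.snd :=
  aevalTower_C _ _ a

theorem cylinderEval_apply (g : R[X]) (r : ℝ) (t : K) :
    cylinderEval φ g (r, t) =
      (g.map ((ContinuousMap.evalAlgHom ℝ ℝ t).comp φ : R →+* ℝ)).eval r := by
  induction g using Polynomial.induction_on with
  | C a => simp [cylinderEval_C]
  | add p q hp hq => simp [hp, hq]
  | monomial n a _ => simp [cylinderEval_C, cylinderEval_X]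

theorem nonneg_smul_sq_of_isSumSq {Λ : R[X] →ₗ[ℝ] ℝ} (hΛ : ∀ g : R[X], 0 ≤ Λ (g ^ 2)) {a : R}
    (ha : IsSumSq a) (g : R[X]) : 0 ≤ Λ (a • g ^ 2) := by
  induction ha with
  | zero => simp
  | sq_add b _ ih =>
    rw [add_smul, map_add, ← sq, ← _root_.smul_pow]
    exact add_nonneg (hΛ _) ih

variable {φ}

theorem nonneg_of_cylinderEval_nonneg (hR : IsOrderUnit (sumSqCone R).toSubmodule 1)
    (hφ : ∀ χ : R →ₐ[ℝ] ℝ, ∃ t, χ = (ContinuousMap.evalAlgHom ℝ ℝ t).comp φ)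
    {Λ : R[X] →ₗ[ℝ] ℝ} (hΛ : ∀ g : R[X], 0 ≤ Λ (g ^ 2)) {g : R[X]}
    (hg : ∀ y, 0 ≤ cylinderEval φ g y) : 0 ≤ Λ g := by
  refine nonneg_of_forall_character_eval_nonneg hR
    (fun a ha p => nonneg_smul_sq_of_isSumSq hΛ (mem_sumSqCone.1 ha) _) fun χ _ x => ?_
  obtain ⟨t, rfl⟩ := hφ χ
  exact cylinderEval_apply φ g x t ▸ hg (x, t)

theorem exists_measure_integral_cylinderEval_eq [CompactSpace K] [T2Space K]
    [SecondCountableTopology K] [MeasurableSpace K] [BorelSpace K]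
    (hR : IsOrderUnit (sumSqCone R).toSubmodule 1)
    (hφ : ∀ χ : R →ₐ[ℝ] ℝ, ∃ t, χ = (ContinuousMap.evalAlgHom ℝ ℝ t).comp φ)
    {Λ : R[X] →ₗ[ℝ] ℝ} (hΛ : ∀ g : R[X], 0 ≤ Λ (g ^ 2)) :
    ∃ μ : Measure (ℝ × K), ∀ g,
      Integrable (cylinderEval φ g) μ ∧ ∫ y, cylinderEval φ g y ∂μ = Λ g := by
  have hproper : IsProperMap (cylinderEval φ X) := by
    rw [cylinderEval_X]
    exact isProperMap_fst_of_compactSpace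
  exact exists_measure_integral_eq_of_isProperMap (Λ := Λ) (ev := cylinderEval φ)
    (fun g hg => nonneg_of_cylinderEval_nonneg hR hφ hΛ hg) hproper

end CylinderEval

section Sphere

variable {d : ℕ}

instance : TopologicalSpace (Sph d) :=
  inferInstanceAs (TopologicalSpace {t : Fin d → ℝ // ∑ i, t i ^ 2 = 1})

instance : T2Space (Sph d) :=
  inferInstanceAs (T2Space {t : Fin d → ℝ // ∑ i, t i ^ 2 = 1})

instance : SecondCountableTopology (Sph d) :=
  inferInstanceAs (SecondCountableTopology {t : Fin d → ℝ // ∑ i, t i ^ 2 = 1})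

instance : BorelSpace (Sph d) :=
  inferInstanceAs (BorelSpace {t : Fin d → ℝ // ∑ i, t i ^ 2 = 1})

instance : CompactSpace (Sph d) := by
  refine isCompact_iff_compactSpace.1 <|
    (isCompact_univ_pi fun _ : Fin d => isCompact_Icc (a := (-1 : ℝ)) (b := 1)).of_isClosed_subset
      (isClosed_eq (by fun_prop) continuous_const) fun t (ht : ∑ i, t i ^ 2 = 1) i _ => ?_
  have hi : t i ^ 2 ≤ 1 :=
    ht ▸ Finset.single_le_sum (f := fun i => t i ^ 2) (fun _ _ => sq_nonneg _) (Finset.mem_univ i)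
  exact abs_le.1 ((sq_le_one_iff_abs_le_one _).1 hi)

instance : Neg (Sph d) :=
  ⟨fun t => ⟨-t.1, by simpa using t.2⟩⟩

/-- The `j`-th coordinate function on the unit sphere. -/
def sphereCoord (j : Fin d) : C(Sph d, ℝ) where
  toFun t := t.1 j
  continuous_toFun := (continuous_apply j).comp continuous_subtype_val

/-- The algebra of polynomial functions on the unit sphere. -/
def sphereAlg (d : ℕ) : Subalgebra ℝ C(Sph d, ℝ) :=
  Algebra.adjoin ℝ (Set.range sphereCoord)

/-- The coordinate functions as elements of `sphereAlg d`. -/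
def sphereAlgCoord (j : Fin d) : sphereAlg d :=
  ⟨sphereCoord j, Algebra.subset_adjoin ⟨j, rfl⟩⟩

theorem sum_sphereAlgCoord_sq : ∑ j, sphereAlgCoord (d := d) j ^ 2 = 1 := by
  ext t
  simpa [sphereAlgCoord, sphereCoord] using t.2

theorem adjoin_range_sphereAlgCoord :
    Algebra.adjoin ℝ (Set.range (sphereAlgCoord (d := d))) = ⊤ := by
  apply Subalgebra.map_injective (f := (sphereAlg d).val) Subtype.val_injective
  rw [AlgHom.map_adjoin, ← Set.range_comp, Algebra.map_top, Subalgebra.range_val]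
  rfl

theorem isOrderUnit_sumSqCone_sphereAlg : IsOrderUnit (sumSqCone (sphereAlg d)).toSubmodule 1 := by
  refine isOrderUnit_sumSqCone_one (sum_sphereAlgCoord_sq (d := d)) ?_
  exact adjoin_range_sphereAlgCoord

theorem exists_eq_evalAlgHom_comp_val (χ : sphereAlg d →ₐ[ℝ] ℝ) :
    ∃ t, χ = (ContinuousMap.evalAlgHom ℝ ℝ t).comp (sphereAlg d).val := by
  have hsum : ∑ j, χ (sphereAlgCoord j) ^ 2 = 1 := by
    simp only [← map_pow, ← map_sum, sum_sphereAlgCoord_sq, map_one]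
  refine ⟨⟨fun j => χ (sphereAlgCoord j), hsum⟩,
    AlgHom.ext_of_adjoin_eq_top adjoin_range_sphereAlgCoord ?_⟩
  rintro _ ⟨j, rfl⟩
  rfl

theorem exists_measure_integral_cylinderEval_sphereAlg_eq {Λ : (sphereAlg d)[X] →ₗ[ℝ] ℝ}
    (hΛ : ∀ g : (sphereAlg d)[X], 0 ≤ Λ (g ^ 2)) :
    ∃ μ : Measure (ℝ × Sph d), ∀ g, Integrable (cylinderEval (sphereAlg d).val g) μ ∧
      ∫ y, cylinderEval (sphereAlg d).val g y ∂μ = Λ g :=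
  exists_measure_integral_cylinderEval_eq isOrderUnit_sumSqCone_sphereAlg
    exists_eq_evalAlgHom_comp_val hΛ

end Sphere

theorem integrable_and_integral_map_comap_coe {Y Z : Type*} [MeasurableSpace Y]
    [MeasurableSpace Z] {S : Set Y} (hS : MeasurableSet S) {π : S → Z} (hπ : Measurable π)
    {f : Z → ℝ} (hf : Measurable f) {g : Y → ℝ} (hfg : ∀ y : S, g y = f (π y))
    {μ : Measure Y} (hg : Integrable g μ) :
    Integrable f ((μ.comap (↑)).map π) ∧
      ∫ z, f z ∂(μ.comap (↑)).map π = ∫ y in S, g y ∂μ := by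
  have hcomp : f ∘ π = g ∘ (↑) := funext fun y => (hfg y).symm
  constructor
  · rw [integrable_map_measure hf.aestronglyMeasurable hπ.aemeasurable, hcomp,
      ← (MeasurableEmbedding.subtype_coe hS).integrable_map_iff, map_comap_subtype_coe hS]
    exact hg.integrableOn
  · rw [integral_map hπ.aemeasurable hf.aestronglyMeasurable, ← integral_subtype_comap hS g]
    exact integral_congr_ae (.of_forall fun y => (hfg y).symm)

section BlowUp

variable {d : ℕ}

/-- The sphere `{0} × Sph d` in the cylinder `ℝ × Sph d`, which the polar coordinates
`(r, t) ↦ r • t` collapse to the origin. -/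
def exceptionalSphere (d : ℕ) : Set (ℝ × Sph d) :=
  {y | y.1 = 0}

theorem measurableSet_exceptionalSphere : MeasurableSet (exceptionalSphere d) :=
  measurableSet_eq_fun measurable_fst measurable_const

theorem smul_coe_ne_zero {r : ℝ} (hr : r ≠ 0) (t : Sph d) : r • t.1 ≠ 0 := by
  refine smul_ne_zero hr fun h => ?_
  simpa [h] using t.2

/-- Polar coordinates `(r, t) ↦ r • t`, as a two-to-one map onto the punctured space; `r` takes
both signs. -/
def blowDown (y : ↥(exceptionalSphere d)ᶜ) : Xsp d :=
  ⟨y.1.1 • y.1.2.1, smul_coe_ne_zero y.2 _⟩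

theorem measurable_blowDown : Measurable (blowDown (d := d)) := by
  refine Measurable.subtype_mk ?_
  have hsphere : Measurable fun y : ↥(exceptionalSphere d)ᶜ => y.1.2.1 :=
    measurable_subtype_coe.comp (measurable_snd.comp measurable_subtype_coe)
  exact (measurable_fst.comp measurable_subtype_coe).smul hsphere

theorem measurable_of_mem_Aalg {f : Xsp d → ℝ} (hf : f ∈ Aalg d) : Measurable f := by
  have hcoord (j : Fin d) : Measurable (coordFn (d := d) j) :=
    (measurable_pi_apply j).comp measurable_subtype_coe
  induction hf using Algebra.adjoin_induction with
  | mem f hf =>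
    obtain ⟨j, rfl⟩ | ⟨⟨k, l⟩, rfl⟩ := hf
    · exact hcoord j
    · exact ((hcoord k).mul (hcoord l)).div
        (Finset.measurable_sum _ fun i _ => (hcoord i).pow_const 2)
  | algebraMap c => exact measurable_const
  | add f g _ _ hf hg => exact hf.add hg
  | mul f g _ _ hf hg => exact hf.mul hg

theorem exists_cylinderEval_eq_comp_blowDown {f : Xsp d → ℝ} (hf : f ∈ Aalg d) :
    ∃ g, ∀ y : ↥(exceptionalSphere d)ᶜ, cylinderEval (sphereAlg d).val g y = f (blowDown y) := by
  induction hf using Algebra.adjoin_induction with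
  | mem f hf =>
    obtain ⟨j, rfl⟩ | ⟨⟨k, l⟩, rfl⟩ := hf
    · refine ⟨X * C (sphereAlgCoord j), fun y => ?_⟩
      rw [map_mul, cylinderEval_X, cylinderEval_C]
      rfl
    · refine ⟨C (sphereAlgCoord k * sphereAlgCoord l), fun y => ?_⟩
      have hy : y.1.1 ≠ 0 := y.2
      have ht : ∑ i, y.1.2.1 i ^ 2 = 1 := y.1.2.2
      rw [cylinderEval_C]
      simp only [fklFn, blowDown, Pi.smul_apply, smul_eq_mul, mul_pow, ← Finset.mul_sum, ht]
      change y.1.2.1 k * y.1.2.1 l = _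
      field_simp
  | algebraMap c => exact ⟨algebraMap ℝ _ c, fun y => by rw [AlgHom.commutes]; rfl⟩
  | add f₁ f₂ _ _ h₁ h₂ =>
    obtain ⟨⟨g₁, hg₁⟩, g₂, hg₂⟩ := And.intro h₁ h₂
    exact ⟨g₁ + g₂, fun y => by simp [hg₁, hg₂]⟩
  | mul f₁ f₂ _ _ h₁ h₂ =>
    obtain ⟨⟨g₁, hg₁⟩, g₂, hg₂⟩ := And.intro h₁ h₂
    exact ⟨g₁ * g₂, fun y => by simp [hg₁, hg₂]⟩

theorem tendsto_radial {f : Xsp d → ℝ} {g : C(ℝ × Sph d, ℝ)}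
    (hfg : ∀ y : ↥(exceptionalSphere d)ᶜ, g y = f (blowDown y)) (t : Sph d) :
    Tendsto (fun r : ℝ => if hr : r • t.1 ≠ 0 then f ⟨r • t.1, hr⟩ else 0) (𝓝[>] 0)
      (𝓝 (g (0, t))) := by
  have hlim : Tendsto (fun r => g (r, t)) (𝓝[>] 0) (𝓝 (g (0, t))) :=
    ((by fun_prop : Continuous fun r => g (r, t)).tendsto 0).mono_left nhdsWithin_le_nhds
  refine hlim.congr' ?_
  filter_upwards [self_mem_nhdsWithin] with r hr
  have hr0 : r ≠ 0 := ne_of_gt hr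
  rw [dif_pos (smul_coe_ne_zero hr0 t)]
  exact hfg ⟨(r, t), hr0⟩

end BlowUp

section Symmetrization

variable {d : ℕ}

theorem sum_coe_sq_pos (x : Xsp d) : 0 < ∑ i, x.1 i ^ 2 := by
  obtain ⟨i, hi⟩ := Function.ne_iff.1 x.2
  exact Finset.sum_pos' (fun _ _ => sq_nonneg _) ⟨i, Finset.mem_univ i, sq_pos_of_ne_zero hi⟩

/-- The Euclidean norm on the punctured space. -/
noncomputable def radius (x : Xsp d) : ℝ :=
  √(∑ i, x.1 i ^ 2)

theorem sq_radius (x : Xsp d) : radius x ^ 2 = ∑ i, x.1 i ^ 2 :=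
  Real.sq_sqrt (sum_coe_sq_pos x).le

theorem radius_ne_zero (x : Xsp d) : radius x ≠ 0 :=
  (Real.sqrt_pos.2 (sum_coe_sq_pos x)).ne'

theorem sum_inv_radius_smul_sq (x : Xsp d) : ∑ i, ((radius x)⁻¹ • x.1) i ^ 2 = 1 := by
  simp only [Pi.smul_apply, smul_eq_mul, mul_pow]
  rw [← Finset.mul_sum, ← sq_radius, ← mul_pow, inv_mul_cancel₀ (radius_ne_zero x), one_pow]

/-- The polar coordinates of a point, with positive radius; the other preimage of `x` under
`blowDown` is `-polar x`. -/
noncomputable def polar (x : Xsp d) : ℝ × Sph d :=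
  (radius x, ⟨(radius x)⁻¹ • x.1, sum_inv_radius_smul_sq x⟩)

theorem blowDown_polar (x : Xsp d) : blowDown ⟨polar x, radius_ne_zero x⟩ = x :=
  Subtype.ext (smul_inv_smul₀ (radius_ne_zero x) x.1)

theorem blowDown_neg_polar (x : Xsp d) :
    blowDown ⟨-polar x, neg_ne_zero.2 (radius_ne_zero x)⟩ = x :=
  Subtype.ext ((neg_smul_neg _ _).trans (smul_inv_smul₀ (radius_ne_zero x) x.1))

/-- The even part under `y ↦ -y` of a function on the cylinder, as a function on the punctured
space. -/
noncomputable def symmetrize : C(ℝ × Sph d, ℝ) →ₗ[ℝ] (Xsp d → ℝ) where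
  toFun g x := (g (polar x) + g (-polar x)) / 2
  map_add' g h := by
    ext x
    simp only [ContinuousMap.add_apply, Pi.add_apply]
    ring
  map_smul' c g := by
    ext x
    simp only [ContinuousMap.smul_apply, Pi.smul_apply, smul_eq_mul, RingHom.id_apply]
    ring

theorem symmetrize_apply (g : C(ℝ × Sph d, ℝ)) (x : Xsp d) :
    symmetrize g x = (g (polar x) + g (-polar x)) / 2 :=
  rfl

theorem symmetrize_eq_of_comp_blowDown {f : Xsp d → ℝ} {g : C(ℝ × Sph d, ℝ)}
    (hfg : ∀ y : ↥(exceptionalSphere d)ᶜ, g y = f (blowDown y)) : symmetrize g = f := by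
  ext x
  have h₁ := hfg ⟨polar x, radius_ne_zero x⟩
  have h₂ := hfg ⟨-polar x, neg_ne_zero.2 (radius_ne_zero x)⟩
  rw [blowDown_polar] at h₁
  rw [blowDown_neg_polar] at h₂
  rw [symmetrize_apply, h₁, h₂, add_self_div_two]

/-- The `j`-th coordinate of the spherical component of a point of the cylinder. -/
def angularCoord (j : Fin d) : C(ℝ × Sph d, ℝ) :=
  (sphereCoord j).comp ContinuousMap.snd

theorem angularCoord_polar (j : Fin d) (x : Xsp d) :
    angularCoord j (polar x) = (radius x)⁻¹ * x.1 j :=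
  rfl

theorem angularCoord_neg (j : Fin d) (y : ℝ × Sph d) : angularCoord j (-y) = -angularCoord j y :=
  rfl

theorem symmetrize_angularCoord_mul (j : Fin d) (g : C(ℝ × Sph d, ℝ)) (x : Xsp d) :
    symmetrize (angularCoord j * g) x =
      angularCoord j (polar x) * ((g (polar x) - g (-polar x)) / 2) := by
  simp only [symmetrize_apply, ContinuousMap.mul_apply, angularCoord_neg]
  ring

theorem sum_angularCoord_sq (y : ℝ × Sph d) : ∑ j, angularCoord j y ^ 2 = 1 :=
  y.2.2

theorem symmetrize_mul (g h : C(ℝ × Sph d, ℝ)) :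
    symmetrize (g * h) = symmetrize g * symmetrize h +
      ∑ j, symmetrize (angularCoord j * g) * symmetrize (angularCoord j * h) := by
  ext x
  simp only [Pi.add_apply, Pi.mul_apply, Finset.sum_apply, symmetrize_angularCoord_mul,
    mul_mul_mul_comm, ← sq, ← Finset.sum_mul, sum_angularCoord_sq]
  simp only [symmetrize_apply, ContinuousMap.mul_apply]
  ring

theorem symmetrize_angularCoord_mul_mul (j : Fin d) (g h : C(ℝ × Sph d, ℝ)) :
    symmetrize (angularCoord j * (g * h)) =
      symmetrize g * symmetrize (angularCoord j * h) +
        symmetrize (angularCoord j * g) * symmetrize h := by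
  ext x
  simp only [Pi.add_apply, Pi.mul_apply, symmetrize_angularCoord_mul]
  simp only [symmetrize_apply, ContinuousMap.mul_apply]
  ring

theorem symmetrize_algebraMap (c : ℝ) :
    symmetrize (d := d) (algebraMap ℝ _ c) = algebraMap ℝ _ c := by
  ext
  exact add_self_div_two c

theorem symmetrize_fst : symmetrize (d := d) ContinuousMap.fst = 0 := by
  ext
  simp [symmetrize_apply]

theorem symmetrize_angularCoord (j : Fin d) : symmetrize (angularCoord j) = 0 := by
  ext
  simp [symmetrize_apply, angularCoord_neg]

theorem symmetrize_angularCoord_mul_fst (j : Fin d) :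
    symmetrize (angularCoord j * ContinuousMap.fst) = coordFn j := by
  ext x
  have hfst : ContinuousMap.fst (polar x) = radius x := rfl
  have hneg : ContinuousMap.fst (-polar x) = -radius x := rfl
  rw [symmetrize_angularCoord_mul, hneg, hfst, sub_neg_eq_add, add_self_div_two,
    angularCoord_polar, mul_right_comm, inv_mul_cancel₀ (radius_ne_zero x), one_mul, coordFn]

theorem symmetrize_angularCoord_mul_angularCoord (j k : Fin d) :
    symmetrize (angularCoord j * angularCoord k) = fklFn j k := by
  ext x
  rw [symmetrize_angularCoord_mul, angularCoord_neg, sub_neg_eq_add, add_self_div_two,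
    angularCoord_polar, angularCoord_polar, fklFn, ← sq_radius]
  field_simp

/-- The functions on the cylinder whose even part and whose odd part, multiplied by each of the
angular coordinates, belong to `Aalg d`. -/
noncomputable def parityAlg (d : ℕ) : Subalgebra ℝ C(ℝ × Sph d, ℝ) where
  carrier := {g | symmetrize g ∈ Aalg d ∧ ∀ j, symmetrize (angularCoord j * g) ∈ Aalg d}
  algebraMap_mem' c := by
    refine ⟨symmetrize_algebraMap (d := d) c ▸ (Aalg d).algebraMap_mem c, fun j => ?_⟩
    rw [← Algebra.commutes, ← Algebra.smul_def, map_smul, symmetrize_angularCoord, smul_zero]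
    exact zero_mem _
  add_mem' {g h} hg hh := by
    refine ⟨map_add symmetrize g h ▸ add_mem hg.1 hh.1, fun j => ?_⟩
    rw [mul_add, map_add]
    exact add_mem (hg.2 j) (hh.2 j)
  mul_mem' {g h} hg hh := by
    refine ⟨symmetrize_mul g h ▸ ?_, fun j => symmetrize_angularCoord_mul_mul j g h ▸ ?_⟩
    · exact add_mem (mul_mem hg.1 hh.1) (sum_mem fun j _ => mul_mem (hg.2 j) (hh.2 j))
    · exact add_mem (mul_mem hg.1 (hh.2 j)) (mul_mem (hg.2 j) hh.1)

theorem mem_parityAlg {g : C(ℝ × Sph d, ℝ)} :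
    g ∈ parityAlg d ↔
      symmetrize g ∈ Aalg d ∧ ∀ j, symmetrize (angularCoord j * g) ∈ Aalg d :=
  Iff.rfl

theorem fst_mem_parityAlg : ContinuousMap.fst ∈ parityAlg d := by
  refine ⟨symmetrize_fst (d := d) ▸ zero_mem _, fun j => ?_⟩
  exact symmetrize_angularCoord_mul_fst j ▸ (coordA j).2

theorem angularCoord_mem_parityAlg (j : Fin d) : angularCoord j ∈ parityAlg d := by
  refine ⟨symmetrize_angularCoord j ▸ zero_mem _, fun k => ?_⟩
  exact symmetrize_angularCoord_mul_angularCoord k j ▸ (fklA k j).2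

theorem cylinderEval_mem_parityAlg (g : (sphereAlg d)[X]) :
    cylinderEval (sphereAlg d).val g ∈ parityAlg d := by
  have hcoeff {a : C(Sph d, ℝ)} (ha : a ∈ sphereAlg d) :
      a.comp ContinuousMap.snd ∈ parityAlg d := by
    have hle : sphereAlg d ≤ (parityAlg d).comap
        (ContinuousMap.compRightAlgHom ℝ ℝ ContinuousMap.snd) :=
      Algebra.adjoin_le (Set.range_subset_iff.2 angularCoord_mem_parityAlg)
    exact hle ha
  induction g using Polynomial.induction_on with
  | C a => exact cylinderEval_C (sphereAlg d).val a ▸ hcoeff a.2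
  | add p q hp hq => exact map_add (cylinderEval (sphereAlg d).val) p q ▸ add_mem hp hq
  | monomial n a h =>
    rw [pow_succ, ← mul_assoc, map_mul, cylinderEval_X]
    exact mul_mem h fst_mem_parityAlg

/-- The even part of a polynomial function on the cylinder, as an element of `Aalg d`. -/
noncomputable def evenPart (d : ℕ) : (sphereAlg d)[X] →ₗ[ℝ] Aalg d :=
  LinearMap.codRestrict (Aalg d).toSubmodule
    (symmetrize ∘ₗ (cylinderEval (sphereAlg d).val).toLinearMap)
    fun g => (cylinderEval_mem_parityAlg g).1

theorem coe_evenPart (g : (sphereAlg d)[X]) :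
    (evenPart d g : Xsp d → ℝ) = symmetrize (cylinderEval (sphereAlg d).val g) :=
  rfl

theorem map_evenPart_sq_nonneg {L : Aalg d →ₗ[ℝ] ℝ} (hL : ∀ g : Aalg d, 0 ≤ L (g ^ 2))
    (g : (sphereAlg d)[X]) : 0 ≤ L (evenPart d (g ^ 2)) := by
  obtain ⟨_, hodd⟩ := mem_parityAlg.1 (cylinderEval_mem_parityAlg g)
  have hsq : evenPart d (g ^ 2) = evenPart d g ^ 2 + ∑ j, (⟨_, hodd j⟩ : Aalg d) ^ 2 := by
    apply Subtype.ext
    rw [coe_evenPart, sq, map_mul, symmetrize_mul]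
    simp only [sq, AddMemClass.coe_add, MulMemClass.coe_mul, AddSubmonoidClass.coe_finsetSum,
      coe_evenPart]
  rw [hsq, map_add, map_sum]
  exact add_nonneg (hL _) (Finset.sum_nonneg fun j _ => hL _)

end Symmetrization

/-- **Theorem 4.2.**  Every linear functional `L` on the algebra `A`
(generated on `ℝ^d ∖ {0}` by the polynomials and the functions
`f_kl(x) = x_k x_l/‖x‖²`) that is nonnegative on squares is given by a measure
`ν₀` on the unit sphere (integrating the radial limits at `0`) together with a
measure `ν₁` on `ℝ^d ∖ {0}`. -/
theorem positive_functional_on_Aalg_representation (d : ℕ) (hd : 1 ≤ d)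
    (L : Aalg d →ₗ[ℝ] ℝ) (hL : ∀ g : Aalg d, 0 ≤ L (g ^ 2)) :
    ∃ (ν₀ : MeasureTheory.Measure (Sph d)) (ν₁ : MeasureTheory.Measure (Xsp d)),
      ∀ f : Aalg d, ∃ f₀ : Sph d → ℝ,
        (∀ t : Sph d,
          Filter.Tendsto
            (fun r : ℝ =>
              if hr : (r • (t.1 : Fin d → ℝ)) ≠ 0 then (f : Xsp d → ℝ) ⟨r • t.1, hr⟩ else 0)
            (nhdsWithin 0 (Set.Ioi 0)) (nhds (f₀ t))) ∧
        MeasureTheory.Integrable f₀ ν₀ ∧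
        MeasureTheory.Integrable (f : Xsp d → ℝ) ν₁ ∧
        L f = (∫ t : Sph d, f₀ t ∂ν₀) + ∫ x : Xsp d, (f : Xsp d → ℝ) x ∂ν₁ := by
  obtain ⟨μ, hμ⟩ := exists_measure_integral_cylinderEval_sphereAlg_eq
    (Λ := L ∘ₗ evenPart d) (map_evenPart_sq_nonneg hL)
  have hS : MeasurableSet (exceptionalSphere d) := measurableSet_exceptionalSphere
  refine ⟨(μ.comap ((↑) : exceptionalSphere d → _)).map fun y => y.1.2,
    (μ.comap ((↑) : ↥(exceptionalSphere d)ᶜ → _)).map blowDown, fun f => ?_⟩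
  obtain ⟨g, hg⟩ := exists_cylinderEval_eq_comp_blowDown f.2
  obtain ⟨hint, hμg⟩ := hμ g
  have hgf : evenPart d g = f := Subtype.ext (symmetrize_eq_of_comp_blowDown hg)
  obtain ⟨hint₀, hν₀⟩ := integrable_and_integral_map_comap_coe hS
    (measurable_snd.comp measurable_subtype_coe)
    (f := fun t => cylinderEval (sphereAlg d).val g (0, t)) (by fun_prop)
    (fun y => congrArg (fun r => cylinderEval (sphereAlg d).val g (r, y.1.2)) y.2) hint
  obtain ⟨hint₁, hν₁⟩ := integrable_and_integral_map_comap_coe hS.compl measurable_blowDown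
    (measurable_of_mem_Aalg f.2) hg hint
  refine ⟨_, tendsto_radial hg, hint₀, hint₁, ?_⟩
  calc L f = ∫ y, cylinderEval (sphereAlg d).val g y ∂μ := by rw [hμg, ← hgf]; rfl
    _ = _ := (integral_add_compl hS hint).symm
    _ = _ := congrArg₂ (· + ·) hν₀.symm hν₁.symm
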